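/- Let 𝒰 be an ultrafilter on [1,∞) that contains no bounded subset of [1,∞). Then there exist a free ultrafilter η on ℕ and t ∈ [0,1] such that for every f ∈ L^∞[1,∞), 𝒰-lim_x (1/x)∫_1^x f(s) ds = ψ_{(η,t)}(f). -/

import Mathlib

open Filter MeasureTheory

noncomputable section

/-- Lebesgue measure restricted to `[1,∞)`. -/
abbrev muIci : Measure ℝ := volume.restrict (Set.Ici (1:ℝ))

/-!
Write `x = b ^ (⌊log_b x⌋ + r x)` with `r x ∈ [0, 1)`, let `η` be the image of `𝒰` under
`x ↦ ⌊log_b x⌋` and let `t` be the limit of `r` along `𝒰`. Then `b ^ (⌊log_b x⌋ + t) / x → 1`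
along `𝒰`, and the mean of an essentially bounded function is insensitive to an asymptotically
trivial dilation of the upper endpoint, so its limit along `𝒰` is its limit along `n ↦ b ^ (n + t)`
with respect to `η`.
-/

open scoped Topology

theorem le_atTop_of_isBounded_notMem {α : Type*} [LinearOrder α] [Bornology α] [IsOrderBornology α]
    {𝒰 : Ultrafilter α} {a : α} (ha : Set.Ici a ∈ 𝒰)
    (hB : ∀ B ⊆ Set.Ici a, Bornology.IsBounded B → B ∉ 𝒰) : (𝒰 : Filter α) ≤ atTop := by
  refine le_iInf fun c => le_principal_iff.2 ?_
  by_contra hc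
  have hsub : Set.Ici a ∩ (Set.Ici c)ᶜ ⊆ Set.Icc a c := fun x hx => ⟨hx.1, (not_le.1 hx.2).le⟩
  exact hB _ Set.inter_subset_left (bddBelow_Icc.isBounded bddAbove_Icc |>.subset hsub)
    (inter_mem ha (Ultrafilter.compl_mem_iff_notMem.2 hc))

theorem exists_tendsto_of_eventually_mem_isCompact {ι X : Type*} [TopologicalSpace X] {K : Set X}
    (hK : IsCompact K) {𝒰 : Ultrafilter ι} {g : ι → X} (hg : ∀ᶠ i in 𝒰, g i ∈ K) :
    ∃ x ∈ K, Tendsto g 𝒰 (𝓝 x) :=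
  hK.ultrafilter_le_nhds (𝒰.map g) (le_principal_iff.2 hg)

theorem rpow_natFloor_logb_add {b x : ℝ} (hb : 1 < b) (hx : 1 ≤ x) (t : ℝ) :
    b ^ ((⌊Real.logb b x⌋₊ : ℝ) + t) = b ^ (t - Int.fract (Real.logb b x)) * x := by
  have hb0 : 0 < b := zero_lt_one.trans hb
  have hfloor : (⌊Real.logb b x⌋₊ : ℝ) = Real.logb b x - Int.fract (Real.logb b x) := by
    rw [natCast_floor_eq_intCast_floor (Real.logb_nonneg hb hx), Int.self_sub_fract]
  calc b ^ ((⌊Real.logb b x⌋₊ : ℝ) + t)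
      = b ^ (t - Int.fract (Real.logb b x) + Real.logb b x) := by rw [hfloor]; congr 1; ring
    _ = b ^ (t - Int.fract (Real.logb b x)) * x := by
        rw [Real.rpow_add hb0, Real.rpow_logb hb0 hb.ne' (zero_lt_one.trans_le hx)]

theorem tendsto_rpow_natFloor_logb_add_div {l : Filter ℝ} (hl : l ≤ atTop) {b t : ℝ} (hb : 1 < b)
    (ht : Tendsto (fun x => Int.fract (Real.logb b x)) l (𝓝 t)) :
    Tendsto (fun x => b ^ ((⌊Real.logb b x⌋₊ : ℝ) + t) / x) l (𝓝 1) := by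
  have hpow : Tendsto (fun x => b ^ (t - Int.fract (Real.logb b x))) l (𝓝 (b ^ (t - t))) :=
    tendsto_const_nhds.rpow (tendsto_const_nhds.sub ht) (Or.inl (zero_lt_one.trans hb).ne')
  rw [sub_self, Real.rpow_zero] at hpow
  refine hpow.congr' ?_
  filter_upwards [hl (eventually_ge_atTop 1)] with x hx
  rw [rpow_natFloor_logb_add hb hx, mul_div_cancel_right₀ _ (zero_lt_one.trans_le hx).ne']

section Mean

variable {E : Type*} [NormedAddCommGroup E] [NormedSpace ℝ E] {f : ℝ → E}

theorem norm_setIntegral_Icc_sub_le {a x y : ℝ} (hf : MemLp f ⊤ (volume.restrict (Set.Ici a)))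
    (hx : a ≤ x) (hy : a ≤ y) :
    ‖(∫ s in Set.Icc a x, f s) - ∫ s in Set.Icc a y, f s‖ ≤
      lpNorm f ⊤ (volume.restrict (Set.Ici a)) * |x - y| := by
  have hint {z : ℝ} (hz : a ≤ z) : IntervalIntegrable f volume a z := by
    rw [intervalIntegrable_iff_integrableOn_Icc_of_le hz]
    exact (hf.mono_measure (Measure.restrict_mono Set.Icc_subset_Ici_self le_rfl)).integrable le_top
  have hIcc {z : ℝ} (hz : a ≤ z) : ∫ s in Set.Icc a z, f s = ∫ s in a..z, f s := by
    rw [intervalIntegral.integral_of_le hz, integral_Icc_eq_integral_Ioc]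
  rw [hIcc hx, hIcc hy, intervalIntegral.integral_interval_sub_left (hint hx) (hint hy)]
  apply intervalIntegral.norm_integral_le_of_norm_le_const_ae
  filter_upwards [(ae_restrict_iff' measurableSet_Ici).1 (ae_le_lpNorm_exponent_top hf)] with s hs
  exact fun hmem => hs ((le_min hy hx).trans hmem.1.le)

/-- The mean `x⁻¹ ∫_1^x f` whose limits are compared; as in `ψ_{(η,t)}`, the integral is divided by
`x` and not by the length `x - 1` of the interval. -/
def cesaroMean (f : ℝ → E) (x : ℝ) : E :=
  (1 / x) • ∫ s in Set.Icc (1 : ℝ) x, f s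

theorem norm_cesaroMean_le (hf : MemLp f ⊤ muIci) {x : ℝ} (hx : 1 ≤ x) :
    ‖cesaroMean f x‖ ≤ lpNorm f ⊤ muIci := by
  have hx0 : 0 < x := zero_lt_one.trans_le hx
  have hint : ‖∫ s in Set.Icc (1 : ℝ) x, f s‖ ≤ lpNorm f ⊤ muIci * (x - 1) := by
    simpa [abs_of_nonneg (sub_nonneg.2 hx)] using norm_setIntegral_Icc_sub_le hf hx le_rfl
  rw [cesaroMean, norm_smul, Real.norm_of_nonneg (by positivity), one_div, inv_mul_le_iff₀ hx0,
    mul_comm]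
  exact hint.trans (by gcongr; exacts [lpNorm_nonneg, sub_le_self x zero_le_one])

theorem norm_cesaroMean_sub_le (hf : MemLp f ⊤ muIci) {x y : ℝ} (hx : 1 ≤ x) (hy : 1 ≤ y) :
    ‖cesaroMean f x - cesaroMean f y‖ ≤ 2 * lpNorm f ⊤ muIci * |1 - y / x| := by
  have hx0 : 0 < x := zero_lt_one.trans_le hx
  have hy0 : y ≠ 0 := (zero_lt_one.trans_le hy).ne'
  have hsplit : cesaroMean f x - cesaroMean f y =
      (1 / x) • ((∫ s in Set.Icc (1 : ℝ) x, f s) - ∫ s in Set.Icc (1 : ℝ) y, f s) -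
        (1 - y / x) • cesaroMean f y := by
    have hcoeff : (1 - y / x) * (1 / y) = 1 / y - 1 / x := by field_simp [hy0]
    simp only [cesaroMean, smul_smul, hcoeff]
    module
  have habs : 1 / x * |x - y| = |1 - y / x| := by
    rw [one_sub_div hx0.ne', abs_div, abs_of_pos hx0]; ring
  calc ‖cesaroMean f x - cesaroMean f y‖
      ≤ 1 / x * ‖(∫ s in Set.Icc (1 : ℝ) x, f s) - ∫ s in Set.Icc (1 : ℝ) y, f s‖ +
          |1 - y / x| * ‖cesaroMean f y‖ := by
        rw [hsplit]
        refine (norm_sub_le _ _).trans_eq ?_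
        rw [norm_smul, norm_smul, Real.norm_of_nonneg (by positivity), Real.norm_eq_abs]
    _ ≤ 1 / x * (lpNorm f ⊤ muIci * |x - y|) + |1 - y / x| * lpNorm f ⊤ muIci := by
        gcongr
        exacts [norm_setIntegral_Icc_sub_le hf hx hy, norm_cesaroMean_le hf hy]
    _ = 2 * lpNorm f ⊤ muIci * |1 - y / x| := by rw [← habs]; ring

theorem tendsto_cesaroMean_sub_cesaroMean_of_tendsto_div {ι : Type*} {l : Filter ι} {u v : ι → ℝ}
    (hf : MemLp f ⊤ muIci) (hu : ∀ᶠ i in l, 1 ≤ u i) (hv : ∀ᶠ i in l, 1 ≤ v i)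
    (huv : Tendsto (fun i => v i / u i) l (𝓝 1)) :
    Tendsto (fun i => cesaroMean f (u i) - cesaroMean f (v i)) l (𝓝 0) := by
  have hbound : Tendsto (fun i => 2 * lpNorm f ⊤ muIci * |1 - v i / u i|) l (𝓝 0) := by
    simpa using (huv.const_sub 1).abs.const_mul (2 * lpNorm f ⊤ muIci)
  refine squeeze_zero_norm' ?_ hbound
  filter_upwards [hu, hv] with i hui hvi using norm_cesaroMean_sub_le hf hui hvi

theorem exists_tendsto_cesaroMean [ProperSpace E] {𝒰 : Ultrafilter ℝ}
    (h𝒰 : (𝒰 : Filter ℝ) ≤ atTop) (hf : MemLp f ⊤ muIci) :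
    ∃ L, Tendsto (cesaroMean f) 𝒰 (𝓝 L) := by
  have hball : ∀ᶠ x in 𝒰, cesaroMean f x ∈ Metric.closedBall 0 (lpNorm f ⊤ muIci) := by
    filter_upwards [h𝒰 (eventually_ge_atTop 1)] with x hx
    exact mem_closedBall_zero_iff.2 (norm_cesaroMean_le hf hx)
  obtain ⟨L, -, hL⟩ := exists_tendsto_of_eventually_mem_isCompact (isCompact_closedBall _ _) hball
  exact ⟨L, hL⟩

end Mean

theorem stmt6_general {E : Type*} [NormedAddCommGroup E] [NormedSpace ℝ E] [ProperSpace E]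
    {b : ℝ} (hb : 1 < b) (𝒰 : Ultrafilter ℝ) (h𝒰 : (𝒰 : Filter ℝ) ≤ atTop) :
    ∃ (η : Ultrafilter ℕ) (t : ℝ), (η : Filter ℕ) ≤ Filter.cofinite ∧ t ∈ Set.Icc (0 : ℝ) 1 ∧
      ∀ f : ℝ → E, MemLp f ⊤ muIci →
        ∃ L : E, Tendsto (cesaroMean f) 𝒰 (𝓝 L) ∧
          Tendsto (fun n : ℕ => cesaroMean f (b ^ ((n : ℝ) + t))) η (𝓝 L) := by
  obtain ⟨t, ht, hfract⟩ : ∃ t ∈ Set.Icc (0 : ℝ) 1,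
      Tendsto (fun x => Int.fract (Real.logb b x)) 𝒰 (𝓝 t) :=
    exists_tendsto_of_eventually_mem_isCompact isCompact_Icc <|
      .of_forall fun _ => ⟨Int.fract_nonneg _, (Int.fract_lt_one _).le⟩
  refine ⟨𝒰.map fun x => ⌊Real.logb b x⌋₊, t, ?_, ht, fun f hf => ?_⟩
  · rw [Nat.cofinite_eq_atTop]
    exact (tendsto_nat_floor_atTop.comp (Real.tendsto_logb_atTop hb)).mono_left h𝒰
  obtain ⟨L, hL⟩ := exists_tendsto_cesaroMean h𝒰 hf
  have hone_le (x : ℝ) : 1 ≤ b ^ ((⌊Real.logb b x⌋₊ : ℝ) + t) :=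
    Real.one_le_rpow hb.le (add_nonneg (Nat.cast_nonneg _) ht.1)
  have hdiff := tendsto_cesaroMean_sub_cesaroMean_of_tendsto_div hf
    (h𝒰 (eventually_ge_atTop 1)) (.of_forall hone_le)
    (tendsto_rpow_natFloor_logb_add_div h𝒰 hb hfract)
  refine ⟨L, hL, ?_⟩
  rw [Ultrafilter.coe_map, tendsto_map'_iff]
  simpa [Function.comp_def] using hL.sub hdiff

/-- For every ultrafilter `𝒰` on `[1,∞)` containing no bounded subset of
`[1,∞)` there are a free ultrafilter `η` on `ℕ` and `t ∈ [0,1]` such that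
`𝒰-lim_x (1/x)∫_1^x f = ψ_{(η,t)}(f) = η-lim_n 2^{-(n+t)} ∫_1^{2^{n+t}} f` for every
`f ∈ L^∞[1,∞)`. -/
theorem stmt6 (𝒰 : Ultrafilter ℝ) (h1 : Set.Ici (1:ℝ) ∈ 𝒰)
    (h2 : ∀ B ⊆ Set.Ici (1:ℝ), Bornology.IsBounded B → B ∉ 𝒰) :
    ∃ (η : Ultrafilter ℕ) (t : ℝ), (η : Filter ℕ) ≤ Filter.cofinite ∧ t ∈ Set.Icc (0:ℝ) 1 ∧
      ∀ f : ℝ → ℝ, MemLp f ⊤ muIci →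
        limUnder (𝒰 : Filter ℝ) (fun x : ℝ => (1 / x) * ∫ s in Set.Icc (1:ℝ) x, f s) =
          limUnder (η : Filter ℕ)
            (fun n : ℕ => (2:ℝ) ^ (-((n : ℝ) + t)) *
              ∫ y in Set.Icc (1:ℝ) ((2:ℝ) ^ ((n : ℝ) + t)), f y) := by
  obtain ⟨η, t, hη, ht, h⟩ :=
    stmt6_general (E := ℝ) one_lt_two 𝒰 (le_atTop_of_isBounded_notMem h1 h2)
  refine ⟨η, t, hη, ht, fun f hf => ?_⟩
  obtain ⟨L, hL, hLη⟩ := h f hf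
  simp only [cesaroMean, smul_eq_mul, one_div, ← Real.rpow_neg zero_le_two] at hLη
  exact hL.limUnder_eq.trans hLη.limUnder_eq.symm
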